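/- arXiv:2511.09701 — 3 statements merged into one kernel-verified Lean document; each statement's English description precedes it below -/
import Mathlib

section
/- Let T > 0 and t ∈ [0,T]. Define k : ℝ → ℝ by k(s) := cosh(min(s,t)) · cosh(T − max(s,t)) / sinh(T), and define g : ℝ → ℝ by g(s) := sinh(s) · cosh(T − t) / sinh(T) for s ≤ t and g(s) := − cosh(t) · sinh(T − s) / sinh(T) for s > t. Then k is continuous on [0,T], k(d) − k(c) = ∫_c^d g(r) dr for all 0 ≤ c ≤ d ≤ T, and for every continuously differentiable φ : ℝ → ℝ one has ∫_0^T k(s) φ(s) ds + ∫_0^T g(s) φ'(s) ds = φ(t). -/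
/-!
Green's function of `-∂² + q` is `k s = u (min s t) * v (max s t)`, where `u` and `v` solve the
homogeneous equation. Its derivative `g` is smooth on either side of `t`, so integrating `g * φ'` by
parts on each side leaves the boundary terms and the jump of `g` at `t`, which is the Wronskian of
`u` and `v` up to sign. For `q = 1`, `u = cosh` and `v = cosh (T - ·) / sinh T` satisfy the Neumann
conditions `u' 0 = v' T = 0`, so the boundary terms vanish, and the Wronskian is normalised to one
by the addition formula `sinh T = sinh t * cosh (T - t) + cosh t * sinh (T - t)`.
-/

open MeasureTheory Set Real

section Gluing

variable {E : Type*} [NormedAddCommGroup E] {f g : ℝ → E} {μ : Measure ℝ} {a b t : ℝ}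

theorem intervalIntegrable_ite_le (hf : IntervalIntegrable f μ a b)
    (hg : IntervalIntegrable g μ a b) :
    IntervalIntegrable (fun s ↦ if s ≤ t then f s else g s) μ a b :=
  ⟨Integrable.piecewise (s := Iic t) measurableSet_Iic hf.1.integrableOn hg.1.integrableOn,
    Integrable.piecewise (s := Iic t) measurableSet_Iic hf.2.integrableOn hg.2.integrableOn⟩

theorem integral_ite_le [NormedSpace ℝ E] (ht : t ∈ Icc a b) (hf : IntervalIntegrable f μ a t)
    (hg : IntervalIntegrable g μ t b) :
    ∫ s in a..b, (if s ≤ t then f s else g s) ∂μ = (∫ s in a..t, f s ∂μ) + ∫ s in t..b, g s ∂μ := by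
  have hleft : EqOn f (fun s ↦ if s ≤ t then f s else g s) (uIoc a t) := fun s hs ↦
    (if_pos (uIoc_of_le ht.1 ▸ hs).2).symm
  have hright : EqOn g (fun s ↦ if s ≤ t then f s else g s) (uIoc t b) := fun s hs ↦
    (if_neg (uIoc_of_le ht.2 ▸ hs).1.not_ge).symm
  rw [← intervalIntegral.integral_add_adjacent_intervals (hf.congr hleft) (hg.congr hright),
    intervalIntegral.integral_congr_ae (ae_of_all μ hleft),
    intervalIntegral.integral_congr_ae (ae_of_all μ hright)]

end Gluing

section IntegrationByParts

variable {F f H h φ : ℝ → ℝ} {a b t : ℝ}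

theorem integral_mul_add_integral_mul_deriv_eq_sub (hF : ∀ s, HasDerivAt F (f s) s)
    (hf : Continuous f) (hφ : AbsolutelyContinuousOnInterval φ a b) :
    (∫ s in a..b, f s * φ s) + ∫ s in a..b, F s * deriv φ s = F b * φ b - F a * φ a := by
  have hdF : deriv F = f := funext fun s ↦ (hF s).deriv
  have hFC : ContDiff ℝ 1 F :=
    contDiff_one_iff_deriv.2 ⟨fun s ↦ (hF s).differentiableAt, hdF ▸ hf⟩
  rw [hFC.contDiffOn.absolutelyContinuousOnInterval.integral_mul_deriv_eq_deriv_mul hφ, hdF,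
    add_sub_cancel]

theorem integral_ite_mul_add_integral_ite_mul_deriv (hF : ∀ s, HasDerivAt F (f s) s)
    (hf : Continuous f) (hH : ∀ s, HasDerivAt H (h s) s) (hh : Continuous h)
    (hφ : AbsolutelyContinuousOnInterval φ a b) (ht : t ∈ Icc a b) :
    (∫ s in a..b, (if s ≤ t then f s else h s) * φ s) +
        ∫ s in a..b, (if s ≤ t then F s else H s) * deriv φ s =
      H b * φ b - F a * φ a + (F t - H t) * φ t := by
  have hFc : Continuous F := continuous_iff_continuousAt.2 fun s ↦ (hF s).continuousAt
  have hHc : Continuous H := continuous_iff_continuousAt.2 fun s ↦ (hH s).continuousAt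
  have ht' : t ∈ uIcc a b := Icc_subset_uIcc ht
  have hφl : AbsolutelyContinuousOnInterval φ a t := hφ.mono (uIcc_subset_uIcc_left ht')
  have hφr : AbsolutelyContinuousOnInterval φ t b := hφ.mono (uIcc_subset_uIcc_right ht')
  simp only [ite_mul]
  rw [integral_ite_le ht ((hf.intervalIntegrable a t).mul_continuousOn hφl.continuousOn)
      ((hh.intervalIntegrable t b).mul_continuousOn hφr.continuousOn),
    integral_ite_le ht (hφl.intervalIntegrable_deriv.continuousOn_mul hFc.continuousOn)
      (hφr.intervalIntegrable_deriv.continuousOn_mul hHc.continuousOn)]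
  linear_combination integral_mul_add_integral_mul_deriv_eq_sub hF hf hφl +
    integral_mul_add_integral_mul_deriv_eq_sub hH hh hφr

end IntegrationByParts

section GreenKernel

/-- The kernel `u (min s t) * v (max s t)`: the Green's function with pole `t` of `-∂² + q`, when
`u` and `v` solve the homogeneous equation with the left and right boundary condition respectively
and `u' * v - u * v' = 1`. -/
noncomputable def greenKernel (u v : ℝ → ℝ) (t s : ℝ) : ℝ := u (min s t) * v (max s t)

/-- The derivative of `greenKernel u v t` away from `t`, where `u'` and `v'` are the derivatives of
`u` and `v`; at the pole it takes the value of the left derivative. -/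
noncomputable def greenKernelDeriv (u v u' v' : ℝ → ℝ) (t s : ℝ) : ℝ :=
  if s ≤ t then u' s * v t else u t * v' s

variable {u v u' v' q φ : ℝ → ℝ} {a b s t : ℝ}

theorem greenKernel_of_le (h : s ≤ t) : greenKernel u v t s = u s * v t := by
  rw [greenKernel, min_eq_left h, max_eq_right h]

theorem greenKernel_of_ge (h : t ≤ s) : greenKernel u v t s = u t * v s := by
  rw [greenKernel, min_eq_right h, max_eq_left h]

theorem continuous_greenKernel (hu : Continuous u) (hv : Continuous v) :
    Continuous (greenKernel u v t) :=
  (hu.comp (continuous_id.min continuous_const)).mul (hv.comp (continuous_id.max continuous_const))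

theorem hasDerivAt_greenKernel (hu : HasDerivAt u (u' s) s) (hv : HasDerivAt v (v' s) s)
    (hst : s ≠ t) : HasDerivAt (greenKernel u v t) (greenKernelDeriv u v u' v' t s) s := by
  rcases hst.lt_or_gt with hlt | hgt
  · rw [greenKernelDeriv, if_pos hlt.le]
    refine (hu.mul_const (v t)).congr_of_eventuallyEq ?_
    filter_upwards [Iic_mem_nhds hlt] with r hr using greenKernel_of_le hr
  · rw [greenKernelDeriv, if_neg hgt.not_ge]
    refine (hv.const_mul (u t)).congr_of_eventuallyEq ?_
    filter_upwards [Ici_mem_nhds hgt] with r hr using greenKernel_of_ge hr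

theorem integral_greenKernelDeriv (hu : ∀ s, HasDerivAt u (u' s) s)
    (hv : ∀ s, HasDerivAt v (v' s) s) (hu' : IntervalIntegrable u' volume a b)
    (hv' : IntervalIntegrable v' volume a b) :
    ∫ s in a..b, greenKernelDeriv u v u' v' t s = greenKernel u v t b - greenKernel u v t a :=
  integral_eq_of_hasDerivAt_off_countable _ _ (countable_singleton t)
    (continuous_greenKernel (continuous_iff_continuousAt.2 fun s ↦ (hu s).continuousAt)
      (continuous_iff_continuousAt.2 fun s ↦ (hv s).continuousAt)).continuousOn
    (fun s hs ↦ hasDerivAt_greenKernel (hu s) (hv s) hs.2)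
    (intervalIntegrable_ite_le (hu'.mul_const (v t)) (hv'.const_mul (u t)))

theorem integral_greenKernel_mul_add_integral_greenKernelDeriv_mul_deriv
    (hq : Continuous q) (hu : Continuous u) (hv : Continuous v)
    (hu' : ∀ s, HasDerivAt u' (q s * u s) s) (hv' : ∀ s, HasDerivAt v' (q s * v s) s)
    (hφ : AbsolutelyContinuousOnInterval φ a b) (ht : t ∈ Icc a b) :
    (∫ s in a..b, q s * greenKernel u v t s * φ s) +
        ∫ s in a..b, greenKernelDeriv u v u' v' t s * deriv φ s =
      u t * v' b * φ b - u' a * v t * φ a + (u' t * v t - u t * v' t) * φ t := by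
  have hkernel : ∀ s, q s * greenKernel u v t s =
      if s ≤ t then q s * u s * v t else u t * (q s * v s) := fun s ↦ by
    split_ifs with hst
    · rw [greenKernel_of_le hst, mul_assoc]
    · rw [greenKernel_of_ge (not_le.1 hst).le, mul_left_comm]
  simp only [hkernel, greenKernelDeriv]
  exact integral_ite_mul_add_integral_ite_mul_deriv
    (fun s ↦ (hu' s).mul_const (v t)) ((hq.mul hu).mul_const (v t))
    (fun s ↦ (hv' s).const_mul (u t)) ((hq.mul hv).const_mul (u t)) hφ ht

end GreenKernel

section Neumann

/-- For `T ≠ 0`, the solution of `v'' = v` with Neumann condition `v' T = 0`, normalised by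
`sinh * v - cosh * v' = 1`, so that it is paired with `cosh` in a Green's function. -/
noncomputable def neumannSolution (T s : ℝ) : ℝ := cosh (T - s) / sinh T

/-- The derivative of `neumannSolution T`. -/
noncomputable def neumannSolutionDeriv (T s : ℝ) : ℝ := -sinh (T - s) / sinh T

variable {T t : ℝ}

theorem hasDerivAt_neumannSolution (T s : ℝ) :
    HasDerivAt (neumannSolution T) (neumannSolutionDeriv T s) s :=
  (((hasDerivAt_id s).const_sub T).cosh.div_const (sinh T)).congr_deriv
    (by simp [neumannSolutionDeriv])

theorem hasDerivAt_neumannSolutionDeriv (T s : ℝ) :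
    HasDerivAt (neumannSolutionDeriv T) (neumannSolution T s) s :=
  (((hasDerivAt_id s).const_sub T).sinh.neg.div_const (sinh T)).congr_deriv
    (by simp [neumannSolution])

theorem continuous_neumannSolution (T : ℝ) : Continuous (neumannSolution T) :=
  continuous_iff_continuousAt.2 fun s ↦ (hasDerivAt_neumannSolution T s).continuousAt

theorem continuous_neumannSolutionDeriv (T : ℝ) : Continuous (neumannSolutionDeriv T) :=
  continuous_iff_continuousAt.2 fun s ↦ (hasDerivAt_neumannSolutionDeriv T s).continuousAt

theorem neumannSolutionDeriv_self (T : ℝ) : neumannSolutionDeriv T T = 0 := by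
  simp [neumannSolutionDeriv]

theorem wronskian_cosh_neumannSolution (hT : T ≠ 0) (t : ℝ) :
    sinh t * neumannSolution T t - cosh t * neumannSolutionDeriv T t = 1 := by
  have hsinh : sinh T ≠ 0 := sinh_eq_zero.not.2 hT
  have hadd : sinh t * cosh (T - t) + cosh t * sinh (T - t) = sinh T := by
    rw [← sinh_add, add_sub_cancel]
  rw [neumannSolution, neumannSolutionDeriv]
  field_simp
  linear_combination hadd

theorem integral_greenKernel_cosh_neumannSolution_mul_add (hT : T ≠ 0) (ht : t ∈ Icc 0 T)
    {φ : ℝ → ℝ} (hφ : AbsolutelyContinuousOnInterval φ 0 T) :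
    (∫ s in 0..T, greenKernel cosh (neumannSolution T) t s * φ s) +
        ∫ s in 0..T, greenKernelDeriv cosh (neumannSolution T) sinh (neumannSolutionDeriv T) t s *
          deriv φ s = φ t := by
  have hparts := integral_greenKernel_mul_add_integral_greenKernelDeriv_mul_deriv (q := fun _ ↦ 1)
    continuous_const continuous_cosh (continuous_neumannSolution T)
    (fun s ↦ by simpa only [one_mul] using hasDerivAt_sinh s)
    (fun s ↦ by simpa only [one_mul] using hasDerivAt_neumannSolutionDeriv T s) hφ ht
  rw [wronskian_cosh_neumannSolution hT, neumannSolutionDeriv_self, sinh_zero] at hparts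
  simpa only [one_mul, mul_zero, zero_mul, sub_zero, zero_add] using hparts

end Neumann

theorem stmt_7_general (T t : ℝ) (hT : 0 < T) (ht : t ∈ Icc (0 : ℝ) T) (k g : ℝ → ℝ)
    (hk : k = fun s => cosh (min s t) * cosh (T - max s t) / sinh T)
    (hg : g = fun s => if s ≤ t then sinh s * cosh (T - t) / sinh T
      else -(cosh t * sinh (T - s)) / sinh T) :
    Continuous k ∧ (∀ c d : ℝ, k d - k c = ∫ r in c..d, g r) ∧
    ∀ φ : ℝ → ℝ, AbsolutelyContinuousOnInterval φ 0 T →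
      (∫ s in (0 : ℝ)..T, k s * φ s) + (∫ s in (0 : ℝ)..T, g s * deriv φ s) = φ t := by
  have hkernel : k = greenKernel cosh (neumannSolution T) t := by
    simp only [hk, funext_iff, greenKernel, neumannSolution, mul_div_assoc, implies_true]
  have hderiv : g = greenKernelDeriv cosh (neumannSolution T) sinh (neumannSolutionDeriv T) t := by
    simp only [hg, funext_iff, greenKernelDeriv, neumannSolution, neumannSolutionDeriv,
      ← mul_neg, mul_div_assoc, implies_true]
  rw [hkernel, hderiv]
  exact ⟨continuous_greenKernel continuous_cosh (continuous_neumannSolution T),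
    fun c d ↦ (integral_greenKernelDeriv hasDerivAt_cosh (hasDerivAt_neumannSolution T)
      (continuous_sinh.intervalIntegrable c d)
      ((continuous_neumannSolutionDeriv T).intervalIntegrable c d)).symm,
    fun φ hφ ↦ integral_greenKernel_cosh_neumannSolution_mul_add hT.ne' ht hφ⟩

theorem stmt_7 (T t : ℝ) (hT : 0 < T) (ht : t ∈ Set.Icc (0 : ℝ) T)
    (k g : ℝ → ℝ)
    (hk : k = fun s => Real.cosh (min s t) * Real.cosh (T - max s t) / Real.sinh T)
    (hg : g = fun s => if s ≤ t then Real.sinh s * Real.cosh (T - t) / Real.sinh T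
      else -(Real.cosh t * Real.sinh (T - s)) / Real.sinh T) :
    ContinuousOn k (Set.Icc 0 T) ∧
    (∀ c d : ℝ, 0 ≤ c → c ≤ d → d ≤ T → k d - k c = ∫ r in c..d, g r) ∧
    ∀ φ : ℝ → ℝ, ContDiff ℝ 1 φ →
      (∫ s in (0:ℝ)..T, k s * φ s) + (∫ s in (0:ℝ)..T, g s * deriv φ s) = φ t := by
  obtain ⟨hcont, hprim, hrepr⟩ := stmt_7_general T t hT ht k g hk hg
  exact ⟨hcont.continuousOn, fun c d _ _ _ ↦ hprim c d,
    fun φ hφ ↦ hrepr φ hφ.contDiffOn.absolutelyContinuousOnInterval⟩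
end

section
/- Let T > 0, t ∈ (0,T], and γ > 0. Define k_t : [0,T] → ℝ by k_t(s) := cosh(min(s,t)) · cosh(T − max(s,t)) / sinh(T), and k_0 : [0,T] → ℝ by k_0(s) := cosh(T − s) / sinh(T). Then there is no real number z such that (1 − z) · k_t(s) = γ · z · k_0(s) for all s ∈ [0,T]. -/
open MeasureTheory Set Real

/-!
The kernels `k_a`, `k_b` at two distinct times are linearly independent: for `a < b` the determinant
of their values at `a` and `b` is `cosh a * cosh (T - b) * sinh (b - a) / sinh T`, which does not
vanish. A relation `(1 - z) • k_b = (γ * z) • k_a` would therefore force `1 - z = 0` and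
`γ * z = 0`, hence `γ = 0`.
-/

theorem linearIndependent_of_det_eval_ne_zero {ι X K : Type*} [Fintype ι] [DecidableEq ι]
    [CommRing K] [IsDomain K] {f : ι → X → K} (x : ι → X)
    (hdet : (Matrix.of fun i j => f i (x j)).det ≠ 0) : LinearIndependent K f :=
  .of_comp (LinearMap.funLeft K K x) (Matrix.linearIndependent_rows_of_det_ne_zero hdet)

theorem one_sub_smul_ne_mul_smul_of_linearIndependent {R M : Type*} [Ring R] [AddCommGroup M]
    [Module R M] {v w : M} (hvw : LinearIndependent R ![v, w]) {γ : R} (hγ : γ ≠ 0) (z : R) :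
    (1 - z) • v ≠ (γ * z) • w := by
  intro heq
  obtain ⟨hz, hγz⟩ : 1 - z = 0 ∧ -(γ * z) = 0 :=
    LinearIndependent.pair_iff.mp hvw _ _ (by rw [heq, neg_smul, add_neg_cancel])
  rw [← sub_eq_zero.mp hz, mul_one, neg_eq_zero] at hγz
  exact hγ hγz

theorem cosh_sub_mul_cosh_sub_cosh_mul_cosh_sub (T a b : ℝ) :
    cosh (T - a) * cosh b - cosh a * cosh (T - b) = sinh T * sinh (b - a) := by
  simp only [cosh_sub, sinh_sub]
  ring

/-- The reproducing kernel of the Sobolev space `W^{1,2}([0,T])`: for `t ∈ [0,T]`, the function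
`sobolevKernel T t` is the Riesz representative `k_t` of the evaluation `x ↦ x t`. It is given by
its closed formula, which is used for all real `T`, `t` and `s`. -/
noncomputable def sobolevKernel (T t s : ℝ) : ℝ :=
  cosh (min s t) * cosh (T - max s t) / sinh T

namespace sobolevKernel

variable {T a b s : ℝ}

theorem comm (T a b : ℝ) : sobolevKernel T a b = sobolevKernel T b a := by
  simp only [sobolevKernel, min_comm, max_comm]

theorem apply_of_le (hsa : s ≤ a) :
    sobolevKernel T a s = cosh s * cosh (T - a) / sinh T := by
  rw [sobolevKernel, min_eq_left hsa, max_eq_right hsa]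

theorem zero_apply_of_nonneg (hs : 0 ≤ s) : sobolevKernel T 0 s = cosh (T - s) / sinh T := by
  rw [comm, apply_of_le hs, cosh_zero, one_mul]

theorem det_gram_of_le (hT : T ≠ 0) (hab : a ≤ b) :
    !![sobolevKernel T a a, sobolevKernel T a b; sobolevKernel T b a, sobolevKernel T b b].det =
      cosh a * cosh (T - b) * sinh (b - a) / sinh T := by
  have hsinh : sinh T ≠ 0 := sinh_ne_zero.mpr hT
  rw [Matrix.det_fin_two_of, comm T a b, apply_of_le hab, apply_of_le le_rfl, apply_of_le le_rfl]
  field_simp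
  linear_combination cosh_sub_mul_cosh_sub_cosh_mul_cosh_sub T a b

theorem linearIndependent_domRestrict_pair (hT : T ≠ 0) (hab : a ≠ b) {S : Set ℝ}
    (ha : a ∈ S) (hb : b ∈ S) :
    LinearIndependent ℝ
      ![S.domRestrict (sobolevKernel T a), S.domRestrict (sobolevKernel T b)] := by
  wlog hlt : a < b generalizing a b
  · exact LinearIndependent.pair_symm_iff.mp
      (this hab.symm hb ha (hab.symm.lt_of_le (not_lt.mp hlt)))
  refine linearIndependent_of_det_eval_ne_zero ![⟨a, ha⟩, ⟨b, hb⟩] ?_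
  have hdet : cosh a * cosh (T - b) * sinh (b - a) / sinh T ≠ 0 :=
    div_ne_zero
      (mul_ne_zero (mul_ne_zero (cosh_pos a).ne' (cosh_pos (T - b)).ne')
        (sinh_ne_zero.mpr (sub_ne_zero.mpr hab.symm)))
      (sinh_ne_zero.mpr hT)
  rw [← det_gram_of_le hT hlt.le, Matrix.det_fin_two_of] at hdet
  rwa [Matrix.det_fin_two]

end sobolevKernel

theorem stmt_9_general {T a b γ : ℝ} (hT : T ≠ 0) (hab : a ≠ b) (hγ : γ ≠ 0) {S : Set ℝ}
    (ha : a ∈ S) (hb : b ∈ S) :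
    ¬ ∃ z : ℝ, ∀ s ∈ S, (1 - z) * sobolevKernel T b s = γ * z * sobolevKernel T a s := by
  rintro ⟨z, hz⟩
  exact one_sub_smul_ne_mul_smul_of_linearIndependent
    (sobolevKernel.linearIndependent_domRestrict_pair hT hab.symm hb ha) hγ z
    (funext fun s => hz s s.2)

theorem stmt_9 (T t γ : ℝ) (hT : 0 < T) (ht : t ∈ Set.Ioc (0 : ℝ) T) (hγ : 0 < γ)
    (kt k0 : ℝ → ℝ)
    (hkt : kt = fun s => Real.cosh (min s t) * Real.cosh (T - max s t) / Real.sinh T)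
    (hk0 : k0 = fun s => Real.cosh (T - s) / Real.sinh T) :
    ¬ ∃ z : ℝ, ∀ s ∈ Set.Icc (0 : ℝ) T, (1 - z) * kt s = γ * z * k0 s := by
  rintro ⟨z, hz⟩
  refine stmt_9_general hT.ne' ht.1.ne hγ.ne' (left_mem_Icc.mpr hT.le) (Ioc_subset_Icc_self ht)
    ⟨z, fun s hs => ?_⟩
  rw [sobolevKernel.zero_apply_of_nonneg hs.1]
  simpa only [hkt, hk0, sobolevKernel] using hz s hs
end

section
/- Let T > 0 and L, M ≥ 0. Let b¹ : [0,T] × ℝ → ℝ be such that b¹ and its partial derivative ∂_s b¹ in the first variable exist, are continuous, and satisfy |b¹(s,c) − b¹(s,c')| ≤ L|c − c'| and |∂_s b¹(s,c) − ∂_s b¹(s,c')| ≤ L|c − c'| for all s ∈ [0,T] and c, c' ∈ ℝ. Let b² : [0,T] → ℝ be continuously differentiable with |b²(s)| ≤ M and |(b²)'(s)| ≤ M for all s ∈ [0,T]. Then there exists a constant C ≥ 0 such that for every continuously differentiable x : ℝ → ℝ and every t ∈ [0,T], the function g(s) := b¹(s, x(t)) + b²(s) x(s) satisfies ∫_0^T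 g(s)² ds + ∫_0^T g'(s)² ds ≤ C ( 1 + ∫_0^T x(s)² ds + ∫_0^T x'(s)² ds ). -/
open MeasureTheory Set Real

/-! The value `x t` enters the drift as a constant in `s`, so linear growth reduces to bounding
`‖x t‖ ^ 2` by the squared Sobolev norm of `x`. For this, compare `x t` with `x s` where `‖x s‖ ^ 2`
is the average of `‖x‖ ^ 2`, and integrate `(‖x‖ ^ 2)' = 2 ⟪x, x'⟫ ≤ ‖x‖ ^ 2 + ‖x'‖ ^ 2` between
`s` and `t`. -/

variable {E F : Type*} [NormedAddCommGroup E] [NormedAddCommGroup F]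

/-- Linear growth of `f s : E → F` at infinity, uniformly in the parameter `s ∈ S`. -/
def LinearGrowthOn {ι : Type*} (f : ι → E → F) (S : Set ι) : Prop :=
  ∃ K, ∀ s ∈ S, ∀ c, ‖f s c‖ ≤ K * (1 + ‖c‖)

namespace LinearGrowthOn

variable {ι : Type*} {f : ι → E → F} {S : Set ι}

lemma of_lipschitz [TopologicalSpace ι] {L : ℝ} (hS : IsCompact S)
    (hf : ContinuousOn (fun s => f s 0) S)
    (hlip : ∀ s ∈ S, ∀ c c', ‖f s c - f s c'‖ ≤ L * ‖c - c'‖) : LinearGrowthOn f S := by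
  obtain ⟨K, hK⟩ := hS.exists_bound_of_continuousOn hf
  refine ⟨max K L, fun s hs c => ?_⟩
  calc ‖f s c‖
      ≤ ‖f s 0‖ + ‖f s c - f s 0‖ := norm_le_norm_add_norm_sub' _ _
    _ ≤ K + L * ‖c‖ := add_le_add (hK s hs) (by simpa using hlip s hs c 0)
    _ ≤ max K L + max K L * ‖c‖ := by
        gcongr
        · exact le_max_left K L
        · exact le_max_right K L
    _ = max K L * (1 + ‖c‖) := by ring

lemma exists_norm_sq_le (hf : LinearGrowthOn f S) :
    ∃ K, 0 ≤ K ∧ ∀ s ∈ S, ∀ c, ‖f s c‖ ^ 2 ≤ K * (1 + ‖c‖ ^ 2) := by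
  obtain ⟨K, hK⟩ := hf
  refine ⟨2 * K ^ 2, by positivity, fun s hs c => ?_⟩
  calc ‖f s c‖ ^ 2
      ≤ (K * (1 + ‖c‖)) ^ 2 := pow_le_pow_left₀ (norm_nonneg _) (hK s hs c) 2
    _ = K ^ 2 * (1 + ‖c‖) ^ 2 := mul_pow _ _ _
    _ ≤ K ^ 2 * (2 * (1 ^ 2 + ‖c‖ ^ 2)) := by gcongr; exact add_sq_le
    _ = 2 * K ^ 2 * (1 + ‖c‖ ^ 2) := by ring

end LinearGrowthOn

lemma norm_add_sq_le_two_mul (p q : F) : ‖p + q‖ ^ 2 ≤ 2 * (‖p‖ ^ 2 + ‖q‖ ^ 2) :=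
  (pow_le_pow_left₀ (norm_nonneg _) (norm_add_le p q) 2).trans add_sq_le

variable [NormedSpace ℝ F] {a b : ℝ}

section ContDiffOnIcc

lemma contDiffOn_one_of_hasDerivWithinAt {f f' : ℝ → F} {s : Set ℝ} (hs : UniqueDiffOn ℝ s)
    (hf : ∀ u ∈ s, HasDerivWithinAt f (f' u) s u) (hf' : ContinuousOn f' s) :
    ContDiffOn ℝ 1 f s :=
  (contDiffOn_one_iff_derivWithin hs).2
    ⟨fun u hu => (hf u hu).differentiableWithinAt,
      hf'.congr fun u hu => (hf u hu).derivWithin (hs u hu)⟩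

lemma hasDerivWithinAt_derivWithin_of_contDiffOn_one {f : ℝ → F} {s : Set ℝ} {u : ℝ}
    (hf : ContDiffOn ℝ 1 f s) (hu : u ∈ s) : HasDerivWithinAt f (derivWithin f s u) s u :=
  (hf.differentiableOn one_ne_zero u hu).hasDerivWithinAt

lemma exists_forall_norm_le_and_norm_derivWithin_le {f : ℝ → F} (hab : a < b)
    (hf : ContDiffOn ℝ 1 f (Icc a b)) :
    ∃ M, ∀ s ∈ Icc a b, ‖f s‖ ≤ M ∧ ‖derivWithin f (Icc a b) s‖ ≤ M := by
  have hf' := hf.continuousOn_derivWithin (uniqueDiffOn_Icc hab) le_rfl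
  obtain ⟨M, hM⟩ := isCompact_Icc.exists_bound_of_continuousOn (hf.continuousOn.prodMk hf')
  exact ⟨M, fun s hs => norm_prod_le_iff.1 (hM s hs)⟩

lemma norm_sub_le_integral_norm_derivWithin [CompleteSpace F] {f : ℝ → F} (hab : a < b)
    (hf : ContDiffOn ℝ 1 f (Icc a b)) {s t : ℝ} (hs : s ∈ Icc a b) (ht : t ∈ Icc a b) :
    ‖f t - f s‖ ≤ ∫ u in a..b, ‖derivWithin f (Icc a b) u‖ := by
  have hst : uIcc s t ⊆ Icc a b := uIcc_subset_Icc hs ht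
  have hf' := hf.continuousOn_derivWithin (uniqueDiffOn_Icc hab) le_rfl
  have hderiv : ∀ u ∈ Ioo (min s t) (max s t),
      HasDerivAt f (derivWithin f (Icc a b) u) u := fun u hu =>
    (hasDerivWithinAt_derivWithin_of_contDiffOn_one hf (hst (Ioo_subset_Icc_self hu))).hasDerivAt
      (Filter.mem_of_superset (Icc_mem_nhds hu.1 hu.2) hst)
  have hFTC : ∫ u in s..t, derivWithin f (Icc a b) u = f t - f s :=
    intervalIntegral.integral_eq_sub_of_hasDeriv_right (hf.continuousOn.mono hst)
      (fun u hu => (hderiv u hu).hasDerivWithinAt) (hf'.mono hst).intervalIntegrable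
  have hsub : uIoc s t ⊆ Ioc a b := by
    rw [← uIoc_of_le hab.le]
    exact uIoc_subset_uIoc_of_uIcc_subset_uIcc (hst.trans Icc_subset_uIcc)
  calc ‖f t - f s‖
      ≤ ∫ u in uIoc s t, ‖derivWithin f (Icc a b) u‖ :=
        hFTC ▸ intervalIntegral.norm_integral_le_integral_norm_uIoc
    _ ≤ ∫ u in Ioc a b, ‖derivWithin f (Icc a b) u‖ :=
        setIntegral_mono_set (hf'.norm.integrableOn_Icc.mono_set Ioc_subset_Icc_self)
          (.of_forall fun _ => norm_nonneg _) (.of_forall hsub)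
    _ = ∫ u in a..b, ‖derivWithin f (Icc a b) u‖ :=
        (intervalIntegral.integral_of_le hab.le).symm

end ContDiffOnIcc

/-- The squared norm of `f` in the Sobolev space `W^{1,2}([a, b])`. It is meant for `f` that are
`C¹` on `[a, b]`, whose weak derivative is the derivative within `[a, b]`. -/
noncomputable def sobolevNormSq (a b : ℝ) (f : ℝ → F) : ℝ :=
  (∫ s in a..b, ‖f s‖ ^ 2) + ∫ s in a..b, ‖derivWithin f (Icc a b) s‖ ^ 2

namespace sobolevNormSq

lemma nonneg (hab : a ≤ b) (f : ℝ → F) : 0 ≤ sobolevNormSq a b f :=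
  add_nonneg (intervalIntegral.integral_nonneg hab fun _ _ => sq_nonneg _)
    (intervalIntegral.integral_nonneg hab fun _ _ => sq_nonneg _)

lemma eq_of_hasDerivWithinAt (hab : a < b) {f f' : ℝ → F}
    (hf : ∀ s ∈ Icc a b, HasDerivWithinAt f (f' s) (Icc a b) s) :
    sobolevNormSq a b f = (∫ s in a..b, ‖f s‖ ^ 2) + ∫ s in a..b, ‖f' s‖ ^ 2 := by
  refine congrArg _ (intervalIntegral.integral_congr fun s hs => ?_)
  rw [uIcc_of_le hab.le] at hs
  simp only [(hf s hs).derivWithin (uniqueDiffOn_Icc hab s hs)]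

lemma eq_of_contDiff (hab : a < b) {f : ℝ → F} (hf : ContDiff ℝ 1 f) :
    sobolevNormSq a b f = (∫ s in a..b, ‖f s‖ ^ 2) + ∫ s in a..b, ‖deriv f s‖ ^ 2 :=
  eq_of_hasDerivWithinAt hab fun s _ =>
    (hf.differentiable one_ne_zero s).hasDerivAt.hasDerivWithinAt

lemma continuousOn_integrand (hab : a < b) {f : ℝ → F} (hf : ContDiffOn ℝ 1 f (Icc a b)) :
    ContinuousOn (fun s => ‖f s‖ ^ 2 + ‖derivWithin f (Icc a b) s‖ ^ 2) (Icc a b) :=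
  (hf.continuousOn.norm.pow 2).add
    ((hf.continuousOn_derivWithin (uniqueDiffOn_Icc hab) le_rfl).norm.pow 2)

lemma eq_integral (hab : a < b) {f : ℝ → F} (hf : ContDiffOn ℝ 1 f (Icc a b)) :
    sobolevNormSq a b f = ∫ s in a..b, (‖f s‖ ^ 2 + ‖derivWithin f (Icc a b) s‖ ^ 2) :=
  (intervalIntegral.integral_add
    ((hf.continuousOn.norm.pow 2).intervalIntegrable_of_Icc hab.le)
    (((hf.continuousOn_derivWithin (uniqueDiffOn_Icc hab) le_rfl).norm.pow
      2).intervalIntegrable_of_Icc hab.le)).symm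

lemma le_of_forall_le [NormedSpace ℝ E] (hab : a < b) {f : ℝ → F} {g : ℝ → E} {α β : ℝ}
    (hf : ContDiffOn ℝ 1 f (Icc a b)) (hg : ContDiffOn ℝ 1 g (Icc a b))
    (hfg : ∀ s ∈ Icc a b, ‖f s‖ ^ 2 + ‖derivWithin f (Icc a b) s‖ ^ 2 ≤
      α + β * (‖g s‖ ^ 2 + ‖derivWithin g (Icc a b) s‖ ^ 2)) :
    sobolevNormSq a b f ≤ (b - a) * α + β * sobolevNormSq a b g := by
  have hg_int := ((continuousOn_integrand hab hg).const_mul β).intervalIntegrable_of_Icc hab.le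
    (μ := volume)
  calc sobolevNormSq a b f
      ≤ ∫ s in a..b, (α + β * (‖g s‖ ^ 2 + ‖derivWithin g (Icc a b) s‖ ^ 2)) := by
        rw [eq_integral hab hf]
        exact intervalIntegral.integral_mono_on hab.le
          ((continuousOn_integrand hab hf).intervalIntegrable_of_Icc hab.le)
          (intervalIntegrable_const.add hg_int) hfg
    _ = (b - a) * α + β * sobolevNormSq a b g := by
        rw [intervalIntegral.integral_add intervalIntegrable_const hg_int,
          intervalIntegral.integral_const, intervalIntegral.integral_const_mul,
          eq_integral hab hg, smul_eq_mul]

end sobolevNormSq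

section Embedding

variable [InnerProductSpace ℝ E] {x : ℝ → E}

lemma abs_derivWithin_norm_sq_le (hab : a < b) (hx : ContDiffOn ℝ 1 x (Icc a b)) {s : ℝ}
    (hs : s ∈ Icc a b) :
    |derivWithin (fun u => ‖x u‖ ^ 2) (Icc a b) s| ≤
      ‖x s‖ ^ 2 + ‖derivWithin x (Icc a b) s‖ ^ 2 := by
  have hderiv := (hasDerivWithinAt_derivWithin_of_contDiffOn_one hx hs).norm_sq
  rw [hderiv.derivWithin (uniqueDiffOn_Icc hab s hs), abs_mul, abs_two]
  linarith [abs_real_inner_le_norm (x s) (derivWithin x (Icc a b) s),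
    two_mul_le_add_sq ‖x s‖ ‖derivWithin x (Icc a b) s‖]

lemma norm_sq_sub_norm_sq_le_sobolevNormSq (hab : a < b) (hx : ContDiffOn ℝ 1 x (Icc a b))
    {s t : ℝ} (hs : s ∈ Icc a b) (ht : t ∈ Icc a b) :
    ‖x t‖ ^ 2 - ‖x s‖ ^ 2 ≤ sobolevNormSq a b x := by
  have hx_sq : ContDiffOn ℝ 1 (fun u => ‖x u‖ ^ 2) (Icc a b) := hx.norm_sq ℝ
  calc ‖x t‖ ^ 2 - ‖x s‖ ^ 2
      ≤ ∫ u in a..b, ‖derivWithin (fun u => ‖x u‖ ^ 2) (Icc a b) u‖ :=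
        (le_abs_self _).trans (norm_sub_le_integral_norm_derivWithin hab hx_sq hs ht)
    _ ≤ ∫ u in a..b, (‖x u‖ ^ 2 + ‖derivWithin x (Icc a b) u‖ ^ 2) :=
        intervalIntegral.integral_mono_on hab.le
          ((hx_sq.continuousOn_derivWithin (uniqueDiffOn_Icc hab)
            le_rfl).norm.intervalIntegrable_of_Icc hab.le)
          ((sobolevNormSq.continuousOn_integrand hab hx).intervalIntegrable_of_Icc hab.le)
          fun u hu => abs_derivWithin_norm_sq_le hab hx hu
    _ = sobolevNormSq a b x := (sobolevNormSq.eq_integral hab hx).symm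

theorem norm_sq_le_mul_sobolevNormSq (hab : a < b) (hx : ContDiffOn ℝ 1 x (Icc a b)) {t : ℝ}
    (ht : t ∈ Icc a b) :
    ‖x t‖ ^ 2 ≤ ((b - a)⁻¹ + 1) * sobolevNormSq a b x := by
  have hx_sq : ContinuousOn (fun u => ‖x u‖ ^ 2) (uIcc a b) := by
    rw [uIcc_of_le hab.le]
    exact hx.continuousOn.norm.pow 2
  obtain ⟨s, hs, hs_avg⟩ := exists_eq_interval_average hab.ne hx_sq
  rw [uIoo_of_le hab.le] at hs
  have hxs : ‖x s‖ ^ 2 ≤ (b - a)⁻¹ * sobolevNormSq a b x := by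
    rw [hs_avg, interval_average_eq, smul_eq_mul]
    exact mul_le_mul_of_nonneg_left
      (le_add_of_nonneg_right (intervalIntegral.integral_nonneg hab.le fun _ _ => sq_nonneg _))
      (inv_nonneg.2 (sub_nonneg.2 hab.le))
  linarith [norm_sq_sub_norm_sq_le_sobolevNormSq hab hx (Ioo_subset_Icc_self hs) ht]

end Embedding

/-- The lifted drift `B(t, x)(s) = b¹(s, x(t)) + b²(s) x(s)`, as a function of `s`. -/
def liftedDrift [NormedSpace ℝ E] (b₁ : ℝ → E → F) (b₂ : ℝ → E →L[ℝ] F) (t : ℝ) (x : ℝ → E) :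
    ℝ → F :=
  fun s => b₁ s (x t) + b₂ s (x s)

section LiftedDrift

variable [NormedSpace ℝ E] {b₁ : ℝ → E → F} {b₂ : ℝ → E →L[ℝ] F} {x : ℝ → E} {t M : ℝ}

lemma hasDerivWithinAt_liftedDrift {S : Set ℝ} {s : ℝ} {b₁' : F} {b₂' : E →L[ℝ] F} {x' : E}
    (hb₁ : HasDerivWithinAt (fun r => b₁ r (x t)) b₁' S s) (hb₂ : HasDerivWithinAt b₂ b₂' S s)
    (hx : HasDerivWithinAt x x' S s) :
    HasDerivWithinAt (liftedDrift b₁ b₂ t x) (b₁' + (b₂' (x s) + b₂ s x')) S s :=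
  hb₁.add (hb₂.clm_apply hx)

lemma contDiffOn_liftedDrift {S : Set ℝ} (hb₁ : ContDiffOn ℝ 1 (fun r => b₁ r (x t)) S)
    (hb₂ : ContDiffOn ℝ 1 b₂ S) (hx : ContDiffOn ℝ 1 x S) :
    ContDiffOn ℝ 1 (liftedDrift b₁ b₂ t x) S :=
  hb₁.add (hb₂.clm_apply hx)

lemma norm_add_apply_sq_add_norm_add_add_sq_le {A A' : E →L[ℝ] F} (hA : ‖A‖ ≤ M)
    (hA' : ‖A'‖ ≤ M) (p p' : F) (y y' : E) :
    ‖p + A y‖ ^ 2 + ‖p' + (A' y + A y')‖ ^ 2 ≤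
      2 * (‖p‖ ^ 2 + ‖p'‖ ^ 2) + 6 * M ^ 2 * (‖y‖ ^ 2 + ‖y'‖ ^ 2) := by
  have apply_sq_le {B : E →L[ℝ] F} (hB : ‖B‖ ≤ M) (z : E) : ‖B z‖ ^ 2 ≤ M ^ 2 * ‖z‖ ^ 2 := by
    rw [← mul_pow]
    exact pow_le_pow_left₀ (norm_nonneg _) (B.le_of_opNorm_le hB z) 2
  have hvalue := norm_add_sq_le_two_mul p (A y)
  have hderiv := norm_add_sq_le_two_mul p' (A' y + A y')
  have hderiv_linear := norm_add_sq_le_two_mul (A' y) (A y')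
  have hy' : 0 ≤ M ^ 2 * ‖y'‖ ^ 2 := by positivity
  linarith [apply_sq_le hA y, apply_sq_le hA' y, apply_sq_le hA y']

lemma sobolevNormSq_liftedDrift_le {K : ℝ} (hab : a < b)
    (hb₁ : ContDiffOn ℝ 1 (fun r => b₁ r (x t)) (Icc a b))
    (hb₁_le : ∀ s ∈ Icc a b,
      ‖b₁ s (x t)‖ ^ 2 + ‖derivWithin (fun r => b₁ r (x t)) (Icc a b) s‖ ^ 2 ≤ K)
    (hb₂ : ContDiffOn ℝ 1 b₂ (Icc a b))
    (hb₂_le : ∀ s ∈ Icc a b, ‖b₂ s‖ ≤ M ∧ ‖derivWithin b₂ (Icc a b) s‖ ≤ M)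
    (hx : ContDiffOn ℝ 1 x (Icc a b)) :
    sobolevNormSq a b (liftedDrift b₁ b₂ t x) ≤
      (b - a) * (2 * K) + 6 * M ^ 2 * sobolevNormSq a b x := by
  refine sobolevNormSq.le_of_forall_le hab (contDiffOn_liftedDrift hb₁ hb₂ hx) hx fun s hs => ?_
  have hdrift := hasDerivWithinAt_liftedDrift
    (hasDerivWithinAt_derivWithin_of_contDiffOn_one hb₁ hs)
    (hasDerivWithinAt_derivWithin_of_contDiffOn_one hb₂ hs)
    (hasDerivWithinAt_derivWithin_of_contDiffOn_one hx hs)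
  rw [hdrift.derivWithin (uniqueDiffOn_Icc hab s hs)]
  refine (norm_add_apply_sq_add_norm_add_add_sq_le (hb₂_le s hs).1 (hb₂_le s hs).2
    _ _ _ _).trans ?_
  gcongr
  exact hb₁_le s hs

lemma sobolevNormSq_liftedDrift_mul (hab : a < b) {b₁ : ℝ → ℝ → ℝ} {b₂ b₁' x : ℝ → ℝ}
    (hb₁ : ∀ s ∈ Icc a b, HasDerivWithinAt (fun r => b₁ r (x t)) (b₁' s) (Icc a b) s)
    (hb₂ : ContDiff ℝ 1 b₂) (hx : ContDiff ℝ 1 x) :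
    sobolevNormSq a b (liftedDrift b₁ (ContinuousLinearMap.mul ℝ ℝ ∘ b₂) t x) =
      (∫ s in a..b, (b₁ s (x t) + b₂ s * x s) ^ 2) +
        ∫ s in a..b, (b₁' s + deriv b₂ s * x s + b₂ s * deriv x s) ^ 2 := by
  have hderiv {f : ℝ → ℝ} (hf : ContDiff ℝ 1 f) (s : ℝ) :
      HasDerivWithinAt f (deriv f s) (Icc a b) s :=
    (hf.differentiable one_ne_zero s).hasDerivAt.hasDerivWithinAt
  have hdrift : ∀ s ∈ Icc a b, HasDerivWithinAt
      (liftedDrift b₁ (ContinuousLinearMap.mul ℝ ℝ ∘ b₂) t x)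
      (b₁' s + (deriv b₂ s * x s + b₂ s * deriv x s)) (Icc a b) s := fun s hs =>
    (hb₁ s hs).add ((hderiv hb₂ s).mul (hderiv hx s))
  rw [sobolevNormSq.eq_of_hasDerivWithinAt hab hdrift]
  simp only [liftedDrift, Function.comp_apply, ContinuousLinearMap.mul_apply', norm_eq_abs, sq_abs,
    add_assoc]

end LiftedDrift

theorem stmt_10_general [InnerProductSpace ℝ E] (hab : a < b) {b₁ db₁ : ℝ → E → F}
    {b₂ : ℝ → E →L[ℝ] F}
    (hb₁ : ∀ c, ∀ s ∈ Icc a b, HasDerivWithinAt (fun r => b₁ r c) (db₁ s c) (Icc a b) s)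
    (hdb₁ : ∀ c, ContinuousOn (fun s => db₁ s c) (Icc a b))
    (hb₁_growth : LinearGrowthOn b₁ (Icc a b)) (hdb₁_growth : LinearGrowthOn db₁ (Icc a b))
    (hb₂ : ContDiffOn ℝ 1 b₂ (Icc a b)) :
    ∃ C, 0 ≤ C ∧ ∀ x : ℝ → E, ContDiffOn ℝ 1 x (Icc a b) → ∀ t ∈ Icc a b,
      sobolevNormSq a b (liftedDrift b₁ b₂ t x) ≤ C * (1 + sobolevNormSq a b x) := by
  obtain ⟨K, hK, hb₁_le⟩ := hb₁_growth.exists_norm_sq_le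
  obtain ⟨K', hK', hdb₁_le⟩ := hdb₁_growth.exists_norm_sq_le
  obtain ⟨M, hb₂_le⟩ := exists_forall_norm_le_and_norm_derivWithin_le hab hb₂
  have : 0 ≤ b - a := sub_nonneg.2 hab.le
  set κ : ℝ := (b - a)⁻¹ + 1
  have hκ : 0 ≤ κ := by positivity
  refine ⟨(b - a) * (2 * ((K + K') * (1 + κ))) + 6 * M ^ 2, by positivity, fun x hx t ht => ?_⟩
  set N := sobolevNormSq a b x
  have hN : 0 ≤ N := sobolevNormSq.nonneg hab.le x
  have hxt : 1 + ‖x t‖ ^ 2 ≤ (1 + κ) * (1 + N) := by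
    linarith [norm_sq_le_mul_sobolevNormSq hab hx ht]
  have hb₁xt_le : ∀ s ∈ Icc a b,
      ‖b₁ s (x t)‖ ^ 2 + ‖derivWithin (fun r => b₁ r (x t)) (Icc a b) s‖ ^ 2 ≤
        (K + K') * (1 + ‖x t‖ ^ 2) := fun s hs => by
    rw [(hb₁ (x t) s hs).derivWithin (uniqueDiffOn_Icc hab s hs), add_mul]
    exact add_le_add (hb₁_le s hs (x t)) (hdb₁_le s hs (x t))
  calc sobolevNormSq a b (liftedDrift b₁ b₂ t x)
      ≤ (b - a) * (2 * ((K + K') * (1 + ‖x t‖ ^ 2))) + 6 * M ^ 2 * N :=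
        sobolevNormSq_liftedDrift_le hab (contDiffOn_one_of_hasDerivWithinAt
          (uniqueDiffOn_Icc hab) (hb₁ (x t)) (hdb₁ (x t))) hb₁xt_le hb₂ hb₂_le hx
    _ ≤ (b - a) * (2 * ((K + K') * ((1 + κ) * (1 + N)))) + 6 * M ^ 2 * (1 + N) := by
        gcongr
        exact le_add_of_nonneg_left zero_le_one
    _ = ((b - a) * (2 * ((K + K') * (1 + κ))) + 6 * M ^ 2) * (1 + N) := by ring

theorem stmt_10 (T L M : ℝ) (hT : 0 < T) (hL : 0 ≤ L) (hM : 0 ≤ M)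
    (b₁ db₁ : ℝ → ℝ → ℝ)
    (hb₁deriv : ∀ c : ℝ, ∀ s ∈ Set.Icc (0 : ℝ) T,
      HasDerivWithinAt (fun r => b₁ r c) (db₁ s c) (Set.Icc 0 T) s)
    (hb₁cont : ContinuousOn (fun p : ℝ × ℝ => b₁ p.1 p.2) (Set.Icc 0 T ×ˢ Set.univ))
    (hdb₁cont : ContinuousOn (fun p : ℝ × ℝ => db₁ p.1 p.2) (Set.Icc 0 T ×ˢ Set.univ))
    (hb₁lip : ∀ s ∈ Set.Icc (0 : ℝ) T, ∀ c c' : ℝ, |b₁ s c - b₁ s c'| ≤ L * |c - c'|)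
    (hdb₁lip : ∀ s ∈ Set.Icc (0 : ℝ) T, ∀ c c' : ℝ, |db₁ s c - db₁ s c'| ≤ L * |c - c'|)
    (b₂ : ℝ → ℝ) (hb₂ : ContDiff ℝ 1 b₂)
    (hb₂bd : ∀ s ∈ Set.Icc (0 : ℝ) T, |b₂ s| ≤ M)
    (hdb₂bd : ∀ s ∈ Set.Icc (0 : ℝ) T, |deriv b₂ s| ≤ M) :
    ∃ C : ℝ, 0 ≤ C ∧ ∀ x : ℝ → ℝ, ContDiff ℝ 1 x → ∀ t ∈ Set.Icc (0 : ℝ) T,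
      (∫ s in (0:ℝ)..T, (b₁ s (x t) + b₂ s * x s) ^ 2) +
        (∫ s in (0:ℝ)..T, (db₁ s (x t) + deriv b₂ s * x s + b₂ s * deriv x s) ^ 2) ≤
      C * (1 + (∫ s in (0:ℝ)..T, (x s) ^ 2) + ∫ s in (0:ℝ)..T, (deriv x s) ^ 2) := by
  have hdb₁ (c : ℝ) : ContinuousOn (fun s => db₁ s c) (Icc 0 T) :=
    hdb₁cont.uncurry_right (f := db₁) c (mem_univ c)
  obtain ⟨C, hC, hgrowth⟩ := stmt_10_general hT hb₁deriv hdb₁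
    (.of_lipschitz isCompact_Icc (hb₁cont.uncurry_right (f := b₁) 0 (mem_univ 0)) hb₁lip)
    (.of_lipschitz isCompact_Icc (hdb₁ 0) hdb₁lip)
    ((ContinuousLinearMap.mul ℝ ℝ).contDiff.comp hb₂).contDiffOn
  refine ⟨C, hC, fun x hx t ht => ?_⟩
  simpa only [sobolevNormSq_liftedDrift_mul hT (hb₁deriv (x t)) hb₂ hx,
    sobolevNormSq.eq_of_contDiff hT hx, norm_eq_abs, sq_abs, add_assoc] using
    hgrowth x hx.contDiffOn t ht
end
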